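/- The derivative of the score function of an r-smoothed density is bounded below: s_r'(x) ≥ −1/r² for all x ∈ ℝ with f_r(x) > 0. -/

import Mathlib

/-!
Completing the square in the Gaussian kernel writes the smoothed density as
`f_r(t) = exp (-t² / (2r²)) * M(t)`, where `M` is the moment generating function of `y ↦ y / r²`
under the measure with density `y ↦ f y * gaussPdf r y` (`smoothed_eq_exp_mul_mgf`). Hence
`s_r(t) = -t / r² + K'(t)` with `K = log M` the cumulant generating function, and
`s_r'(t) = -1 / r² + K''(t)`. Since `K''(t)` is the variance of `y / r²` under the exponentially
tilted measure, it is nonnegative, which is the claim.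

The Gaussian weight makes `M` finite everywhere, so `M` and `K` are analytic on all of `ℝ`
(`integrableExpSet_gaussWeighted`).
-/

open MeasureTheory Real

noncomputable section

/-- The Gaussian density with mean 0 and variance `r ^ 2`. -/
def gaussPdf (r x : ℝ) : ℝ :=
  Real.exp (-(x ^ 2) / (2 * r ^ 2)) / Real.sqrt (2 * Real.pi * r ^ 2)

/-- The `r`-smoothed density `f_r`, i.e. the density of `Y + Z` where `Y ~ f` and
`Z ~ N(0, r²)` independent. -/
def smoothed (f : ℝ → ℝ) (r x : ℝ) : ℝ := ∫ y, f y * gaussPdf r (x - y)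

/-- The score function `s_r = f_r' / f_r` of the smoothed density. -/
def score (f : ℝ → ℝ) (r x : ℝ) : ℝ :=
  deriv (fun t => smoothed f r t) x / smoothed f r x

/-- The Fisher information `I_r = E_{x ~ f_r}[s_r(x)²]` of the smoothed density. -/
def fisherInfo (f : ℝ → ℝ) (r : ℝ) : ℝ := ∫ x, score f r x ^ 2 * smoothed f r x

/-- `f` is a probability density on `ℝ`. -/
def IsDensity (f : ℝ → ℝ) : Prop :=
  (∀ x, 0 ≤ f x) ∧ MeasureTheory.Integrable f ∧ (∫ x, f x) = 1

open ProbabilityTheory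

/-- The measure on `ℝ` with Lebesgue density `y ↦ f y * gaussPdf r y`. For nonnegative `f`, its
exponential tilts by `t * y / r²` are, up to normalisation, the posterior laws of `Y` given
`Y + Z = t`. -/
def gaussWeighted (f : ℝ → ℝ) (r : ℝ) : Measure ℝ :=
  volume.withDensity fun y => ENNReal.ofReal (f y * gaussPdf r y)

lemma continuous_gaussPdf (r : ℝ) : Continuous (gaussPdf r) := by
  unfold gaussPdf
  fun_prop

lemma gaussPdf_nonneg (r x : ℝ) : 0 ≤ gaussPdf r x := by
  unfold gaussPdf
  positivity

/-- Completing the square in the exponent of the Gaussian density. -/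
lemma gaussPdf_sub {r : ℝ} (hr : 0 < r) (t y : ℝ) :
    gaussPdf r (t - y) =
      Real.exp (-(t ^ 2) / (2 * r ^ 2)) * (gaussPdf r y * Real.exp (t * (y / r ^ 2))) := by
  have h : -((t - y) ^ 2) / (2 * r ^ 2) =
      -(t ^ 2) / (2 * r ^ 2) + (-(y ^ 2) / (2 * r ^ 2) + t * (y / r ^ 2)) := by
    field_simp
    ring
  unfold gaussPdf
  rw [h, Real.exp_add, Real.exp_add]
  ring

lemma gaussPdf_le (r x : ℝ) : gaussPdf r x ≤ 1 / Real.sqrt (2 * Real.pi * r ^ 2) := by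
  unfold gaussPdf
  gcongr
  rw [Real.exp_le_one_iff]
  exact div_nonpos_of_nonpos_of_nonneg (by nlinarith [sq_nonneg x]) (by positivity)

lemma integrable_mul_gaussPdf_sub {f : ℝ → ℝ} (hf : Integrable f) (r t : ℝ) :
    Integrable fun y => f y * gaussPdf r (t - y) := by
  refine hf.mul_bdd (c := 1 / Real.sqrt (2 * Real.pi * r ^ 2)) ?_ ?_
  · exact ((continuous_gaussPdf r).comp (by fun_prop)).aestronglyMeasurable
  · filter_upwards with y
    rw [Real.norm_of_nonneg (gaussPdf_nonneg _ _)]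
    exact gaussPdf_le _ _

lemma aemeasurable_weight {f : ℝ → ℝ} (hf : Integrable f) (r : ℝ) :
    AEMeasurable fun y => ENNReal.ofReal (f y * gaussPdf r y) :=
  (hf.aemeasurable.mul (continuous_gaussPdf r).aemeasurable).ennreal_ofReal

lemma integrableExpSet_gaussWeighted {f : ℝ → ℝ} {r : ℝ} (hf : IsDensity f) (hr : 0 < r) :
    integrableExpSet (fun y => y / r ^ 2) (gaussWeighted f r) = Set.univ := by
  refine Set.eq_univ_of_forall fun t => ?_
  change Integrable _ (volume.withDensity _)
  rw [integrable_withDensity_iff_integrable_smul₀' (aemeasurable_weight hf.2.1 r)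
    (Filter.Eventually.of_forall fun _ => ENNReal.ofReal_lt_top)]
  refine ((integrable_mul_gaussPdf_sub hf.2.1 r t).const_mul
    (Real.exp (-(t ^ 2) / (2 * r ^ 2)))⁻¹).congr (Filter.Eventually.of_forall fun y => ?_)
  have hE := (Real.exp_pos (-(t ^ 2) / (2 * r ^ 2))).ne'
  simp only [gaussPdf_sub hr, smul_eq_mul,
    ENNReal.toReal_ofReal (mul_nonneg (hf.1 y) (gaussPdf_nonneg r y))]
  field_simp

lemma smoothed_eq_exp_mul_mgf {f : ℝ → ℝ} {r : ℝ} (hf : IsDensity f) (hr : 0 < r) (t : ℝ) :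
    smoothed f r t =
      Real.exp (-(t ^ 2) / (2 * r ^ 2)) * mgf (fun y => y / r ^ 2) (gaussWeighted f r) t := by
  unfold smoothed mgf gaussWeighted
  rw [integral_withDensity_eq_integral_toReal_smul₀ (aemeasurable_weight hf.2.1 r)
    (Filter.Eventually.of_forall fun _ => ENNReal.ofReal_lt_top), ← integral_const_mul]
  congr 1 with y
  rw [gaussPdf_sub hr, smul_eq_mul,
    ENNReal.toReal_ofReal (mul_nonneg (hf.1 y) (gaussPdf_nonneg r y))]
  ring

/-- The derivative of the score of an `r`-smoothed density is bounded below by `−1/r²`. -/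
theorem score_deriv_lower_bound (f : ℝ → ℝ) (r : ℝ) (hf : IsDensity f) (hr : 0 < r)
    (x : ℝ) (hx : 0 < smoothed f r x) :
    -(1 / r ^ 2) ≤ deriv (fun t => score f r t) x := by
  set μ := gaussWeighted f r with hμdef
  set X : ℝ → ℝ := fun y => y / r ^ 2
  have hset : integrableExpSet X μ = Set.univ := integrableExpSet_gaussWeighted hf hr
  have hint (t : ℝ) : t ∈ interior (integrableExpSet X μ) := by simp [hset]
  have hsm (t : ℝ) := smoothed_eq_exp_mul_mgf hf hr t
  -- Positivity of `f_r` at the single point `x` already forces `μ ≠ 0`, hence `f_r > 0` everywhere.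
  have hμ : μ ≠ 0 := by
    intro h
    rw [hsm x, ← hμdef, h] at hx
    simp at hx
  have : NeZero μ := ⟨hμ⟩
  have hsm' : smoothed f r = fun t => Real.exp (-(t ^ 2) / (2 * r ^ 2) + cgf X μ t) := by
    funext t
    rw [hsm t, Real.exp_add, exp_cgf (interior_subset (s := integrableExpSet X μ) (hint t))]
  have hscore : (fun t => score f r t) = fun t => -t / r ^ 2 + deriv (cgf X μ) t := by
    funext t
    have hd : HasDerivAt (fun t => Real.exp (-(t ^ 2) / (2 * r ^ 2) + cgf X μ t))
        (Real.exp (-(t ^ 2) / (2 * r ^ 2) + cgf X μ t) *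
          (-(2 * t) / (2 * r ^ 2) + deriv (cgf X μ) t)) t := by
      refine HasDerivAt.exp (HasDerivAt.add ?_ (analyticAt_cgf (hint t)).differentiableAt.hasDerivAt)
      simpa using ((hasDerivAt_pow 2 t).neg.div_const (2 * r ^ 2))
    unfold score
    rw [hsm', hd.deriv, mul_div_cancel_left₀ _ (Real.exp_pos _).ne']
    field_simp
  have hd2 : HasDerivAt (fun t => -t / r ^ 2 + deriv (cgf X μ) t)
      (-1 / r ^ 2 + deriv (deriv (cgf X μ)) x) x :=
    ((hasDerivAt_id x).neg.div_const _).add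
      (analyticAt_cgf (hint x)).deriv.differentiableAt.hasDerivAt
  have hvar : 0 ≤ deriv (deriv (cgf X μ)) x := by
    have h := variance_tilted_mul (hint x)
    rw [iteratedDeriv_succ, iteratedDeriv_one] at h
    exact h ▸ variance_nonneg _ _
  rw [hscore, hd2.deriv, neg_div]
  linarith

end
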